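/- (Algebraic core of Theorem 8, the closed formula for Σ^{i,1}(r).) Let i ≥ 1, h ≥ 1 and d = ih − i + 1. In ℤ[x_1,…,x_i,y_1,…,y_h], the homogeneous component of degree d of the polynomial ∏_{k=1}^{i} ∏_{l=1}^{h} (1 + y_l − x_k) · ∑_{r=0}^{d} (−1)^r h_r(x_1,…,x_i) equals ∑_{(ν,μ)∈I} (−1)^{|μ|} · F_{ν/μ}(i) · s_μ(x_1,…,x_i) · s_{∁ν~}(y_1,…,y_h), where I = { (ν,μ) : ν a partition with ν_1 ≤ h and l(ν) ≤ i, μ a partition with l(μ) ≤ i, and |ν| − |μ| = i − 1 }, and ∁ν~ denotes the complement of ν~ in the block (i^h), i.e. (∁ν~)_m = i − (ν~)_{h+1−m} for 1 ≤ m ≤ h. In particular the coefficients F_{ν/μ}(i) do not depend on h. -/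

import Mathlib

/-!
STATEMENT 11 (algebraic core of Theorem 8, the closed formula for `Σ^{i,1}(r)`):
with `d = ih − i + 1`, the degree-`d` homogeneous component of
`∏_{k,l} (1 + y_l − x_k) · ∑_{r=0}^{d} (−1)^r h_r(x)` in `ℤ[x_1,…,x_i,y_1,…,y_h]`
equals `∑_{(ν,μ)∈I} (−1)^{|μ|} · F_{ν/μ}(i) · s_μ(x) · s_{∁ν~}(y)`,
where `I = {(ν,μ) : ν_1 ≤ h, l(ν) ≤ i, l(μ) ≤ i, |ν| − |μ| = i − 1}` and `∁ν~` is the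
complement of `ν~` in the block `(i^h)`.  Partitions are encoded 0-based; `μ` is
parametrized by its first `i` parts, with parts ≤ `ih` (any `μ` occurring has
`μ_1 ≤ |μ| = |ν| − (i−1) ≤ ih`); the Schur polynomials are characterized by the
bialternant formula.
-/

open Finset MvPolynomial

/-- The conjugate partition, 0-based: `conjP lam m = (λ~)_{m+1} = #{k : λ_k ≥ m+1}`. -/
noncomputable def conjP (lam : ℕ → ℕ) (m : ℕ) : ℕ := Nat.card {k : ℕ // m + 1 ≤ lam k}

/-- Extension of a bounded tuple to a function `ℕ → ℕ` (zero beyond the box). -/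
def extF {n : ℕ} {m : Fin n → ℕ} (f : (k : Fin n) → Fin (m k + 1)) : ℕ → ℕ :=
  fun k => if h : k < n then (f ⟨k, h⟩ : ℕ) else 0

/-- `Ĉ(a,b) = ∑_{j=0}^{b} C(a,j)`. -/
def Chat (a b : ℕ) : ℤ := ∑ j ∈ Finset.range (b + 1), (a.choose j : ℤ)

/-- `F_{λ/μ}(n) = det[ Ĉ(λ_k + n − k, μ_l + n − l) ]_{1≤k,l≤n}` (indices written 0-based). -/
def Fdet (n : ℕ) (lam mu : ℕ → ℕ) : ℤ :=
  (Matrix.of fun k l : Fin n =>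
    Chat (lam k + (n - 1 - (k : ℕ))) (mu l + (n - 1 - (l : ℕ)))).det

/-- The complete homogeneous symmetric polynomial `h_a(x_1,…,x_i)` in the x-variables. -/
noncomputable def hsymX (i h a : ℕ) : MvPolynomial (Fin i ⊕ Fin h) ℤ :=
  ∑ f ∈ Finset.Nat.antidiagonalTuple i a, ∏ k, X (Sum.inl k) ^ f k

/-- The complement `∁ν~` of `ν~` in the block `(i^h)`:
`(∁ν~)_m = i − (ν~)_{h+1−m}` for `1 ≤ m ≤ h` (written 0-based). -/
noncomputable def complConj (i h : ℕ) (nu : ℕ → ℕ) : ℕ → ℕ :=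
  fun m => if m < h then i - conjP nu (h - 1 - m) else 0

/-!
For `z = -u`, the Vandermonde determinant of `(y, z)` is the product of those of `y` and `z` and of
`∏ (u_k + y_l)`; up to signs, its Laplace expansion along the rows of `z` is the dual Cauchy
identity `∏ (u_k + y_l) = ∑_ν s_ν(u) s_{∁ν~}(y)`, in which `u` may be replaced by `1 + u` without
changing the Vandermonde determinant of `u`. Multiplying the numerator
`det ((1 + u_a) ^ (ν_b + δ_b))` of `s_ν(1 + u)` by `∏ (1 + u_a + ⋯ + u_a ^ D)` turns its entries
into values of the polynomials `(1 + t + ⋯ + t ^ D) (1 + t) ^ e`, whose low coefficients are the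
numbers `Ĉ(e, j)`, so the Cauchy–Binet formula expands the product over the numerators of `s_μ(u)`
with coefficients `F_{ν/μ}`. At `u = -x` the second product agrees with `∑ (-1)^r h_r(x)` in degrees
at most `D`, and it remains to take the component of degree `d` and to cancel the Vandermonde
determinants.
-/

/-! ### Laplace expansion and the Cauchy–Binet formula -/

theorem alternatingMap_apply_eq_sum_orderEmbedding {R M N ι : Type*} [CommRing R]
    [AddCommGroup M] [Module R M] [AddCommGroup N] [Module R N] [LinearOrder ι] [Fintype ι]
    {n : ℕ} (e : Module.Basis ι R M) (f : M [⋀^Fin n]→ₗ[R] N) (v : Fin n → M) :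
    f v = ∑ c : Fin n ↪o ι, (Matrix.of fun a b => e.repr (v a) (c b)).det • f (e ∘ c) := by
  have expansion := congrArg (exteriorPower.alternatingMapLinearEquiv f)
    ((e.exteriorPower n).sum_repr (exteriorPower.ιMulti R n v)).symm
  rw [exteriorPower.alternatingMapLinearEquiv_apply_ιMulti, map_sum] at expansion
  rw [expansion, ← Set.powersetCard.ofFinEmbEquiv.sum_comp]
  refine Finset.sum_congr rfl fun c _ => ?_
  rw [map_smul, exteriorPower.basis_repr_apply, exteriorPower.ιMultiDual_apply_ιMulti,
    exteriorPower.basis_apply, exteriorPower.ιMulti_family,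
    exteriorPower.alternatingMapLinearEquiv_apply_ιMulti, Equiv.symm_apply_apply]
  rfl

theorem det_mul_eq_sum_orderEmbedding {R ι : Type*} [CommRing R] [LinearOrder ι] [Fintype ι]
    {n : ℕ} (A : Matrix (Fin n) ι R) (B : Matrix ι (Fin n) R) :
    (A * B).det = ∑ c : Fin n ↪o ι, (A.submatrix id c).det * (B.submatrix c id).det := by
  have expansion := alternatingMap_apply_eq_sum_orderEmbedding (Pi.basisFun R ι)
    (Matrix.detRowAlternating.compLinearMap B.vecMulLinear) A
  refine expansion.trans (Finset.sum_congr rfl fun c _ => ?_)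
  rw [smul_eq_mul]
  refine congrArg₂ _ rfl (congrArg Matrix.det ?_)
  ext a b
  simp

/-- The determinant of a square matrix whose first rows `Y` are fixed, as an alternating function
of its last `n` rows. -/
noncomputable def detAppend {R : Type*} [CommRing R] {m n : ℕ} (Y : Fin m → Fin (m + n) → R) :
    (Fin (m + n) → R) [⋀^Fin n]→ₗ[R] R where
  toMultilinearMap :=
    (Matrix.detRowAlternating.toMultilinearMap.domDomCongr finSumFinEquiv.symm).currySum Y
  map_eq_zero_of_eq' Z a b hZ hab := by
    refine Matrix.det_zero_of_row_eq (i := Fin.natAdd m a) (j := Fin.natAdd m b)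
      (by simpa using hab) ?_
    simpa using hZ

theorem detAppend_apply {R : Type*} [CommRing R] {m n : ℕ} (Y : Fin m → Fin (m + n) → R)
    (Z : Fin n → Fin (m + n) → R) : detAppend Y Z = (Matrix.of (Fin.append Y Z)).det := by
  refine congrArg Matrix.det (funext fun a => ?_)
  refine Fin.addCases (fun a => ?_) (fun a => ?_) a <;> ext <;> simp

theorem det_append_eq_sum_orderEmbedding {R : Type*} [CommRing R] {m n : ℕ}
    (Y : Fin m → Fin (m + n) → R) (Z : Fin n → Fin (m + n) → R) :
    (Matrix.of (Fin.append Y Z)).det = ∑ c : Fin n ↪o Fin (m + n),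
      (Matrix.of fun a b => Z a (c b)).det *
        (Matrix.of (Fin.append Y fun b => Pi.single (c b) 1)).det := by
  have expansion := alternatingMap_apply_eq_sum_orderEmbedding (Pi.basisFun R (Fin (m + n)))
    (detAppend Y) Z
  simpa [detAppend_apply, Function.comp_def, Pi.basisFun_apply] using expansion

/-! ### Alternants -/

theorem prod_prod_Ioi_append {M : Type*} [CommMonoid M] {m n : ℕ}
    (f : Fin (m + n) → Fin (m + n) → M) :
    ∏ a, ∏ b ∈ Ioi a, f a b =
      (∏ a : Fin m, ∏ b ∈ Ioi a, f (Fin.castAdd n a) (Fin.castAdd n b)) *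
        (∏ a : Fin n, ∏ b ∈ Ioi a, f (Fin.natAdd m a) (Fin.natAdd m b)) *
          ∏ b : Fin n, ∏ a : Fin m, f (Fin.castAdd n a) (Fin.natAdd m b) := by
  have cross (a : Fin m) (b : Fin n) : Fin.castAdd n a < Fin.natAdd m b := by
    simp only [Fin.lt_def, Fin.val_castAdd, Fin.val_natAdd]
    omega
  simp only [← Finset.filter_lt_eq_Ioi, Finset.prod_filter, Fin.prod_univ_add, cross,
    (cross _ _).not_gt, Fin.natAdd_lt_natAdd_iff, (Fin.strictMono_castAdd n).lt_iff_lt, if_true,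
    if_false, prod_const_one, prod_mul_distrib, mul_one]
  rw [Finset.prod_comm (f := fun a b => f (Fin.castAdd n a) (Fin.natAdd m b)),
    mul_left_comm, mul_comm]

theorem prod_filter_fst_lt_snd {M ι : Type*} [CommMonoid M] [LinearOrder ι] [Fintype ι]
    [LocallyFiniteOrderTop ι] (f : ι → ι → M) :
    ∏ q : ι × ι with q.1 < q.2, f q.1 q.2 = ∏ a, ∏ b ∈ Ioi a, f a b := by
  simp only [Finset.prod_filter, Fintype.prod_prod_type, ← Finset.filter_lt_eq_Ioi]

/-- The exponent vector `δ = (n - 1, …, 1, 0)` of the bialternant formula. -/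
def staircase (n : ℕ) (b : Fin n) : ℕ := n - 1 - b

/-- The alternant `det (x_a ^ e_b)`. The bialternant formula says that `alternant x (lam + δ)` is
the Schur polynomial of `lam` times `alternant x δ`. -/
def alternant {R : Type*} [CommRing R] {n : ℕ} (x : Fin n → R) (e : Fin n → ℕ) : R :=
  (Matrix.of fun a b => x a ^ e b).det

section alternant

variable {R : Type*} [CommRing R] {n : ℕ}

theorem alternant_staircase (x : Fin n → R) :
    alternant x (staircase n) = ∏ a, ∏ b ∈ Ioi a, (x a - x b) := by
  have vandermonde := Matrix.det_projVandermonde (fun _ => (1 : R)) x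
  simp only [one_mul] at vandermonde
  rw [← vandermonde]
  refine congrArg Matrix.det (Matrix.ext fun a b => ?_)
  rw [Matrix.projVandermonde_apply, one_pow, one_mul, Fin.val_rev, Matrix.of_apply, staircase,
    Nat.sub_sub, Nat.add_comm 1]

theorem alternant_const_add_staircase (c : R) (x : Fin n → R) :
    alternant (fun a => c + x a) (staircase n) = alternant x (staircase n) := by
  simp only [alternant_staircase, add_sub_add_left_eq_sub]

theorem alternant_staircase_ne_zero [IsDomain R] {x : Fin n → R} (hx : Function.Injective x) :
    alternant x (staircase n) ≠ 0 := by
  rw [alternant_staircase]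
  exact Finset.prod_ne_zero_iff.2 fun a _ => Finset.prod_ne_zero_iff.2 fun b hb =>
    sub_ne_zero.2 (hx.ne (Finset.mem_Ioi.1 hb).ne)

theorem alternant_neg (x : Fin n → R) (e : Fin n → ℕ) :
    alternant (-x) e = (-1) ^ (∑ b, e b) * alternant x e := by
  rw [alternant, alternant, ← prod_pow_eq_pow_sum, ← Matrix.det_mul_row]
  simp only [Pi.neg_apply, neg_pow (x _), Matrix.of_apply]

theorem map_alternant {S : Type*} [CommRing S] (φ : R →+* S) (x : Fin n → R) (e : Fin n → ℕ) :
    φ (alternant x e) = alternant (φ ∘ x) e := by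
  rw [alternant, RingHom.map_det]
  refine congrArg Matrix.det (Matrix.ext fun a b => ?_)
  simp

theorem isHomogeneous_alternant {τ : Type*} {x : Fin n → MvPolynomial τ R}
    (hx : ∀ a, (x a).IsHomogeneous 1) (e : Fin n → ℕ) :
    (alternant x e).IsHomogeneous (∑ b, e b) := by
  rw [alternant, Matrix.det_apply]
  refine IsHomogeneous.sum _ _ _ fun σ _ => ?_
  have hprod : (∏ b, x (σ b) ^ e b).IsHomogeneous (∑ b, e b) :=
    IsHomogeneous.prod _ _ _ fun b _ => by simpa using (hx (σ b)).pow (e b)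
  exact (homogeneousSubmodule τ R _).smul_of_tower_mem _ hprod

end alternant

/-! ### Partitions in a box -/

/-- The partitions with at most `n` parts, all at most `m`, as antitone tuples. -/
def boxPartitions (n m : ℕ) : Finset (Fin n → ℕ) :=
  {nu ∈ Fintype.piFinset fun _ => range (m + 1) | Antitone nu}

theorem mem_boxPartitions {n m : ℕ} {nu : Fin n → ℕ} :
    nu ∈ boxPartitions n m ↔ (∀ k, nu k ≤ m) ∧ Antitone nu := by
  simp [boxPartitions]

theorem sum_boxPartitions {M : Type*} [AddCommMonoid M] {n m : ℕ} (g : (Fin n → ℕ) → M) :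
    ∑ nu ∈ boxPartitions n m, g nu = ∑ nu : Fin n → Fin (m + 1),
      if ∀ a b, a ≤ b → nu b ≤ nu a then g fun k => nu k else 0 := by
  rw [← Finset.sum_filter]
  refine (Finset.sum_nbij (fun (nu : Fin n → Fin (m + 1)) k => (nu k : ℕ)) (fun nu hnu => ?_)
    (fun nu _ nu' _ heq => funext fun k => Fin.ext (congrFun heq k)) (fun nu hnu => ?_)
    fun _ _ => rfl).symm
  · exact mem_boxPartitions.2 ⟨fun k => (nu k).is_le, (Finset.mem_filter.1 hnu).2⟩
  · obtain ⟨nu_le, nu_antitone⟩ := mem_boxPartitions.1 hnu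
    refine ⟨fun k => ⟨nu k, Nat.lt_succ_of_le (nu_le k)⟩, ?_, rfl⟩
    exact Finset.mem_coe.2 (Finset.mem_filter.2 ⟨Finset.mem_univ _, nu_antitone⟩)

/-- The partition with parts `m + b - c b` read off the columns `c` of a maximal minor; the minor
with columns `c`, counted from the right, has exponents `orderEmbeddingPartition c + δ`. -/
def orderEmbeddingPartition {n m : ℕ} (c : Fin n ↪o Fin (m + n)) (b : Fin n) : ℕ :=
  m + b - c b

section orderEmbeddingPartition

variable {n m : ℕ}

theorem val_orderEmbedding_le (c : Fin n ↪o Fin (m + n)) (b : Fin n) : (c b : ℕ) ≤ m + b := by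
  have card_le : #(Ioi b) ≤ #(Ioi (c b)) :=
    Finset.card_le_card_of_injOn c (by simp [Set.MapsTo]) c.injective.injOn
  simp only [Fin.card_Ioi] at card_le
  omega

theorem orderEmbeddingPartition_mem (c : Fin n ↪o Fin (m + n)) :
    orderEmbeddingPartition c ∈ boxPartitions n m := by
  refine mem_boxPartitions.2 ⟨fun b => ?_, fun a b hab => ?_⟩
  · have card_le : #(Iio b) ≤ #(Iio (c b)) :=
      Finset.card_le_card_of_injOn c (by simp [Set.MapsTo]) c.injective.injOn
    simp only [Fin.card_Iio] at card_le
    simp only [orderEmbeddingPartition]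
    omega
  · have card_le : #(Ioc a b) ≤ #(Ioc (c a) (c b)) :=
      Finset.card_le_card_of_injOn c (by simp [Set.MapsTo]) c.injective.injOn
    have := val_orderEmbedding_le c a
    have : (c a : ℕ) ≤ c b := c.monotone hab
    simp only [Fin.card_Ioc] at card_le
    simp only [orderEmbeddingPartition]
    omega

theorem orderEmbeddingPartition_add_staircase (c : Fin n ↪o Fin (m + n)) :
    orderEmbeddingPartition c + staircase n = fun b => staircase (m + n) (c b) := by
  funext b
  have := val_orderEmbedding_le c b
  simp only [Pi.add_apply, orderEmbeddingPartition, staircase]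
  omega

theorem orderEmbeddingPartition_injective :
    Function.Injective (orderEmbeddingPartition : (Fin n ↪o Fin (m + n)) → Fin n → ℕ) := by
  refine fun c c' hcc' => RelEmbedding.ext fun b => Fin.ext ?_
  have := congrFun hcc' b
  have := val_orderEmbedding_le c b
  have := val_orderEmbedding_le c' b
  simp only [orderEmbeddingPartition] at *
  omega

theorem exists_orderEmbeddingPartition_eq {nu : Fin n → ℕ} (hnu : nu ∈ boxPartitions n m) :
    ∃ c : Fin n ↪o Fin (m + n), orderEmbeddingPartition c = nu := by
  obtain ⟨nu_le, nu_antitone⟩ := mem_boxPartitions.1 hnu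
  have columns_strictMono :
      StrictMono fun b : Fin n => (⟨m + b - nu b, by omega⟩ : Fin (m + n)) := by
    intro a b hab
    have := nu_antitone hab.le
    have := nu_le a
    simp only [Fin.lt_def] at hab ⊢
    omega
  refine ⟨OrderEmbedding.ofStrictMono _ columns_strictMono, funext fun b => ?_⟩
  have := nu_le b
  simp only [orderEmbeddingPartition, OrderEmbedding.coe_ofStrictMono]
  omega

theorem sum_orderEmbeddingPartition {M : Type*} [AddCommMonoid M] (g : (Fin n → ℕ) → M) :
    ∑ c : Fin n ↪o Fin (m + n), g (orderEmbeddingPartition c) = ∑ nu ∈ boxPartitions n m, g nu :=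
  Finset.sum_nbij orderEmbeddingPartition (fun c _ => orderEmbeddingPartition_mem c)
    orderEmbeddingPartition_injective.injOn
    (fun _ hnu => (exists_orderEmbeddingPartition_eq hnu).imp fun _ hc => ⟨by simp, hc⟩)
    fun _ _ => rfl

end orderEmbeddingPartition

theorem card_filter_add_val_lt (r m : ℕ) : #{l : Fin m | r + l < m} = m - r := by
  simp only [← Nat.lt_sub_iff_add_lt', Fin.card_filter_val_lt, min_eq_right (Nat.sub_le m r)]

/-- The complement in the block `(n^m)` of the conjugate of a partition `nu` with at most `n`
parts: its `l`-th part `n - #{k | m ≤ nu k + l}` is written without subtraction. -/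
def conjCompl {n : ℕ} (m : ℕ) (nu : Fin n → ℕ) (l : Fin m) : ℕ := #{k | nu k + l < m}

/-- The exponents `∁ν~ + δ` and `ν + δ` side by side; for `ν` in the box they are a permutation of
`0, …, m + n - 1`. -/
def blockExponents {n : ℕ} (m : ℕ) (nu : Fin n → ℕ) : Fin (m + n) → ℕ :=
  Fin.append (conjCompl m nu + staircase m) (nu + staircase n)

section blockExponents

variable {n m : ℕ} {nu : Fin n → ℕ}

theorem strictAnti_add_staircase (hnu : Antitone nu) : StrictAnti (nu + staircase n) := by
  intro a b hab
  have := hnu hab.le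
  simp only [Pi.add_apply, staircase]
  omega

theorem antitone_conjCompl (m : ℕ) (nu : Fin n → ℕ) : Antitone (conjCompl m nu) := by
  refine fun l l' hll' => Finset.card_le_card fun k hk => ?_
  simp only [Finset.mem_filter, Finset.mem_univ, true_and] at hk ⊢
  omega

theorem conjCompl_le (m : ℕ) (nu : Fin n → ℕ) (l : Fin m) : conjCompl m nu l ≤ n := by
  simpa [conjCompl] using Finset.card_filter_le (univ : Finset (Fin n)) fun k => nu k + l < m

theorem sum_conjCompl_add_sum (hnu : ∀ k, nu k ≤ m) :
    ∑ l, conjCompl m nu l + ∑ k, nu k = n * m := by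
  have double_count : ∑ l, conjCompl m nu l = ∑ k, #{l : Fin m | nu k + l < m} :=
    (Finset.sum_card_bipartiteAbove_eq_sum_card_bipartiteBelow fun k (l : Fin m) =>
      nu k + l < m).symm
  simp [double_count, card_filter_add_val_lt, ← Finset.sum_add_distrib, Nat.sub_add_cancel (hnu _)]

theorem add_staircase_lt_conjCompl_add_staircase (hnu : Antitone nu) {l : Fin m} {k : Fin n}
    (hlk : nu k + l < m) : (nu + staircase n) k < (conjCompl m nu + staircase m) l := by
  have card_le : #(Ici k) ≤ conjCompl m nu l := by
    refine Finset.card_le_card fun k' hk' => ?_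
    have := hnu (Finset.mem_Ici.1 hk')
    simp only [Finset.mem_filter, Finset.mem_univ, true_and]
    omega
  simp only [Fin.card_Ici] at card_le
  simp only [Pi.add_apply, staircase]
  omega

theorem conjCompl_add_staircase_lt_add_staircase (hnu : Antitone nu) {l : Fin m} {k : Fin n}
    (hlk : m ≤ nu k + l) : (conjCompl m nu + staircase m) l < (nu + staircase n) k := by
  have card_le : conjCompl m nu l ≤ #(Ioi k) := by
    refine Finset.card_le_card fun k' hk' => ?_
    simp only [Finset.mem_filter, Finset.mem_univ, true_and, Finset.mem_Ioi] at hk' ⊢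
    by_contra! hle
    have := hnu hle
    omega
  simp only [Fin.card_Ioi] at card_le
  simp only [Pi.add_apply, staircase]
  omega

theorem add_staircase_lt_iff (hnu : Antitone nu) {l : Fin m} {k : Fin n} :
    (nu + staircase n) k < (conjCompl m nu + staircase m) l ↔ nu k + l < m := by
  refine ⟨fun hlt => ?_, add_staircase_lt_conjCompl_add_staircase hnu⟩
  by_contra! hle
  exact hlt.not_gt (conjCompl_add_staircase_lt_add_staircase hnu hle)

theorem blockExponents_injective (hnu : Antitone nu) :
    Function.Injective (blockExponents m nu) := by
  have disjoint (l : Fin m) (k : Fin n) :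
      (conjCompl m nu + staircase m) l ≠ (nu + staircase n) k := by
    rcases lt_or_ge (nu k + l) m with hlt | hle
    · exact (add_staircase_lt_conjCompl_add_staircase hnu hlt).ne'
    · exact (conjCompl_add_staircase_lt_add_staircase hnu hle).ne
  exact Fin.append_injective_iff.2
    ⟨(strictAnti_add_staircase (antitone_conjCompl m nu)).injective,
    (strictAnti_add_staircase hnu).injective, disjoint⟩

theorem blockExponents_lt (hnu : nu ∈ boxPartitions n m) (a : Fin (m + n)) :
    blockExponents m nu a < m + n := by
  refine Fin.addCases (fun l => ?_) (fun k => ?_) a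
  · have := conjCompl_le m nu l
    simp only [blockExponents, Fin.append_left, Pi.add_apply, staircase]
    omega
  · have := (mem_boxPartitions.1 hnu).1 k
    simp only [blockExponents, Fin.append_right, Pi.add_apply, staircase]
    omega

theorem exists_perm_staircase_eq_blockExponents (hnu : nu ∈ boxPartitions n m) :
    ∃ σ : Equiv.Perm (Fin (m + n)), ∀ a, staircase (m + n) (σ a) = blockExponents m nu a := by
  have lt := blockExponents_lt hnu
  have rev_injective : Function.Injective fun a => (⟨blockExponents m nu a, lt a⟩ : Fin _).rev :=
    fun a b hab => blockExponents_injective (mem_boxPartitions.1 hnu).2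
      (congrArg Fin.val (Fin.rev_injective hab))
  refine ⟨Equiv.ofBijective _ (Finite.injective_iff_bijective.1 rev_injective), fun a => ?_⟩
  have := lt a
  simp only [Equiv.ofBijective_apply, staircase, Fin.val_rev]
  omega

theorem sign_eq_of_staircase_eq_blockExponents (hnu : nu ∈ boxPartitions n m)
    {σ : Equiv.Perm (Fin (m + n))} (hσ : ∀ a, staircase (m + n) (σ a) = blockExponents m nu a) :
    σ.sign = (-1) ^ ∑ k, nu k := by
  obtain ⟨nu_le, nu_antitone⟩ := mem_boxPartitions.1 hnu
  have lt_iff (a b) : σ a < σ b ↔ blockExponents m nu b < blockExponents m nu a := by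
    simp only [← hσ, staircase, Fin.lt_def]
    omega
  have block_eq_one {p : ℕ} {e : Fin p → ℕ} (he : StrictAnti e) :
      ∏ a, ∏ b ∈ Ioi a, (if e b < e a then (1 : ℤˣ) else -1) = 1 :=
    Finset.prod_eq_one fun a _ => Finset.prod_eq_one fun b hb => if_pos (he (Finset.mem_Ioi.1 hb))
  -- The inversions of `σ` are the pairs `(l, k)` with `m ≤ nu k + l`.
  have cross (k : Fin n) : ∏ l : Fin m, (if nu k + l < m then (1 : ℤˣ) else -1) = (-1) ^ nu k := by
    have card_add :=
      Finset.card_filter_add_card_filter_not (s := univ) fun l : Fin m => nu k + l < m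
    rw [card_filter_add_val_lt, Finset.card_univ, Fintype.card_fin] at card_add
    rw [Finset.prod_ite, prod_const_one, one_mul, prod_const]
    congr 1
    have := nu_le k
    omega
  rw [Equiv.Perm.sign_eq_prod_prod_Ioi, prod_prod_Ioi_append]
  simp only [lt_iff, blockExponents, Fin.append_left, Fin.append_right,
    add_staircase_lt_iff nu_antitone, cross, prod_pow_eq_pow_sum, one_mul,
    block_eq_one (strictAnti_add_staircase (antitone_conjCompl m nu)),
    block_eq_one (strictAnti_add_staircase nu_antitone)]

end blockExponents

/-- The tuple `lam` followed by zeros: the analogue of `extF` for unbounded parts, turning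
tuples into the sequences on which `Fdet` and `complConj` are defined. -/
def zeroExtend {n : ℕ} (lam : Fin n → ℕ) (k : ℕ) : ℕ := if hk : k < n then lam ⟨k, hk⟩ else 0

section zeroExtend

variable {n : ℕ} {lam : Fin n → ℕ}

theorem zeroExtend_of_le {k : ℕ} (hk : n ≤ k) : zeroExtend lam k = 0 :=
  dif_neg hk.not_gt

theorem antitone_zeroExtend (hlam : Antitone lam) : Antitone (zeroExtend lam) := by
  intro k k' hkk'
  by_cases hk' : k' < n
  · rw [zeroExtend, zeroExtend, dif_pos hk', dif_pos (hkk'.trans_lt hk')]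
    exact hlam (Fin.mk_le_mk.2 hkk')
  · rw [zeroExtend_of_le (not_lt.1 hk')]
    exact Nat.zero_le _

theorem conjP_zeroExtend (p : ℕ) : conjP (zeroExtend lam) p = #{k | p < lam k} := by
  rw [conjP, ← Finset.card_map Fin.valEmbedding]
  refine Nat.subtype_card _ fun k => ?_
  by_cases hk : k < n <;> simp [zeroExtend, hk, Fin.exists_iff]

theorem complConj_zeroExtend (h : ℕ) (nu : Fin n → ℕ) :
    complConj n h (zeroExtend nu) = zeroExtend (conjCompl h nu) := by
  funext l
  by_cases hl : l < h
  · have card_add := Finset.card_filter_add_card_filter_not (s := univ) fun k => nu k + l < h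
    rw [Finset.card_univ, Fintype.card_fin] at card_add
    have not_iff (k : Fin n) : h - 1 - l < nu k ↔ ¬ nu k + l < h := by omega
    simp only [complConj, zeroExtend, if_pos hl, dif_pos hl, conjCompl, conjP_zeroExtend, not_iff]
    omega
  · simp only [complConj, zeroExtend, if_neg hl, dif_neg hl]

end zeroExtend

/-! ### The dual Cauchy identity -/

theorem det_append_single {R : Type*} [CommRing R] {m n : ℕ} (Y : Fin m → Fin (m + n) → R)
    (σ : Equiv.Perm (Fin (m + n))) :
    (Matrix.of (Fin.append Y fun b => Pi.single (σ (Fin.natAdd m b)) 1)).det =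
      σ.sign * (Matrix.of fun a b => Y a (σ (Fin.castAdd n b))).det := by
  set A := Matrix.of (Fin.append Y fun b => Pi.single (σ (Fin.natAdd m b)) 1)
  have castAdd_ne (a : Fin n) (b : Fin m) : Fin.castAdd n b ≠ Fin.natAdd m a :=
    Fin.ne_of_val_ne (by simp only [Fin.val_castAdd, Fin.val_natAdd]; omega)
  have blocks : (A.submatrix id σ).submatrix finSumFinEquiv finSumFinEquiv =
      Matrix.fromBlocks (Matrix.of fun a b => Y a (σ (Fin.castAdd n b)))
        (Matrix.of fun a b => Y a (σ (Fin.natAdd m b))) 0 1 := by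
    ext (a | a) (b | b) <;> simp [A, Matrix.one_apply, Pi.single_apply, eq_comm, castAdd_ne]
  have permuted := Matrix.det_permute' σ A
  rw [← Matrix.det_submatrix_equiv_self finSumFinEquiv, blocks, Matrix.det_fromBlocks_zero₂₁,
    Matrix.det_one, mul_one] at permuted
  rw [permuted, ← mul_assoc, ← Int.cast_mul, ← Units.val_mul, Int.units_mul_self, Units.val_one,
    Int.cast_one, one_mul]

theorem det_append_single_orderEmbedding {R : Type*} [CommRing R] {m n : ℕ} (y : Fin m → R)
    (c : Fin n ↪o Fin (m + n)) :
    (Matrix.of (Fin.append (fun a j => y a ^ staircase (m + n) j)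
        fun b => Pi.single (c b) 1)).det =
      (-1) ^ (∑ k, orderEmbeddingPartition c k) *
        alternant y (conjCompl m (orderEmbeddingPartition c) + staircase m) := by
  have mem := orderEmbeddingPartition_mem c
  obtain ⟨σ, hσ⟩ := exists_perm_staircase_eq_blockExponents mem
  have σ_natAdd (b : Fin n) : σ (Fin.natAdd m b) = c b := by
    have hb := hσ (Fin.natAdd m b)
    rw [blockExponents, Fin.append_right, orderEmbeddingPartition_add_staircase] at hb
    simp only [staircase] at hb
    omega
  simp only [← σ_natAdd, det_append_single, sign_eq_of_staircase_eq_blockExponents mem hσ]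
  simp [hσ, blockExponents, alternant]

theorem alternant_append_staircase {R : Type*} [CommRing R] {m n : ℕ} (y : Fin m → R)
    (z : Fin n → R) :
    alternant (Fin.append y z) (staircase (m + n)) =
      alternant y (staircase m) * alternant z (staircase n) * ∏ k, ∏ l, (y l - z k) := by
  simp only [alternant_staircase, prod_prod_Ioi_append, Fin.append_left, Fin.append_right]

theorem alternant_append_staircase_eq_sum {R : Type*} [CommRing R] {m n : ℕ} (y : Fin m → R)
    (z : Fin n → R) :
    alternant (Fin.append y z) (staircase (m + n)) = ∑ nu ∈ boxPartitions n m,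
      (-1) ^ (∑ k, nu k) *
        (alternant z (nu + staircase n) * alternant y (conjCompl m nu + staircase m)) := by
  have rows : (fun a j => Fin.append y z a ^ staircase (m + n) j) =
      Fin.append (fun a j => y a ^ staircase (m + n) j) fun a j => z a ^ staircase (m + n) j := by
    refine funext fun a => Fin.addCases (fun a => ?_) (fun a => ?_) a <;> simp
  rw [alternant, rows, det_append_eq_sum_orderEmbedding, ← sum_orderEmbeddingPartition]
  refine Finset.sum_congr rfl fun c _ => ?_
  rw [det_append_single_orderEmbedding, orderEmbeddingPartition_add_staircase, mul_left_comm]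
  rfl

theorem dual_cauchy_alternant {R : Type*} [CommRing R] {m n : ℕ} (y : Fin m → R) (z : Fin n → R) :
    alternant z (staircase n) * alternant y (staircase m) * ∏ k, ∏ l, (z k + y l) =
      ∑ nu ∈ boxPartitions n m,
        alternant z (nu + staircase n) * alternant y (conjCompl m nu + staircase m) := by
  refine ((isUnit_one (M := R)).neg.pow (∑ k, staircase n k)).mul_left_cancel ?_
  have vandermonde := alternant_append_staircase_eq_sum y (-z)
  simp only [alternant_append_staircase, alternant_neg, Pi.neg_apply, sub_neg_eq_add,
    add_comm (y _)] at vandermonde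
  refine Eq.trans (by ring) (vandermonde.trans ?_)
  rw [Finset.mul_sum]
  refine Finset.sum_congr rfl fun nu _ => ?_
  have sign_sq : ((-1 : R) ^ ∑ k, nu k) * (-1) ^ ∑ k, nu k = 1 := by simp [← mul_pow]
  simp only [Pi.add_apply, Finset.sum_add_distrib, pow_add]
  linear_combination (-1) ^ (∑ k, staircase n k) * alternant z (nu + staircase n) *
    alternant y (conjCompl m nu + staircase m) * sign_sq

/-! ### The determinants `F_{ν/μ}` -/

theorem det_aeval_eq_sum_boxPartitions {S R : Type*} [CommRing S] [CommRing R] [Algebra S R]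
    {n m : ℕ} (u : Fin n → R) {p : Fin n → Polynomial S} (hp : ∀ b, (p b).natDegree < m + n) :
    (Matrix.of fun a b => Polynomial.aeval (u a) (p b)).det =
      ∑ mu ∈ boxPartitions n m, alternant u (mu + staircase n) *
        algebraMap S R (Matrix.of fun a b => (p b).coeff ((mu + staircase n) a)).det := by
  have entry (a b : Fin n) : Polynomial.aeval (u a) (p b) =
      ∑ j : Fin (m + n), u a ^ staircase (m + n) j *
        algebraMap S R ((p b).coeff (staircase (m + n) j)) := by
    rw [Polynomial.aeval_eq_sum_range' (hp b), Finset.sum_range, ← Equiv.sum_comp Fin.revPerm]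
    refine Finset.sum_congr rfl fun j _ => ?_
    have rev_eq : (j.rev : ℕ) = staircase (m + n) j := by
      rw [Fin.val_rev, staircase, Nat.sub_sub, Nat.add_comm 1]
    rw [Fin.revPerm_apply, rev_eq, Algebra.smul_def, mul_comm]
  have factored : (Matrix.of fun a b => Polynomial.aeval (u a) (p b)) =
      (Matrix.of fun a j => u a ^ staircase (m + n) j) *
        Matrix.of fun j b => algebraMap S R ((p b).coeff (staircase (m + n) j)) := by
    ext a b
    simp [entry, Matrix.mul_apply]
  rw [factored, det_mul_eq_sum_orderEmbedding, ← sum_orderEmbeddingPartition]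
  simp only [orderEmbeddingPartition_add_staircase, RingHom.map_det]
  rfl

/-- The polynomial `(1 + t + ⋯ + t^D) (1 + t)^a`, whose coefficients up to degree `D` are
the numbers `Ĉ(a, ·)`. -/
noncomputable def geomBinomial (D a : ℕ) : Polynomial ℤ :=
  (∑ r ∈ range (D + 1), Polynomial.X ^ r) * (1 + Polynomial.X) ^ a

theorem natDegree_geomBinomial_le (D a : ℕ) : (geomBinomial D a).natDegree ≤ D + a := by
  have geom_le : (∑ r ∈ range (D + 1), Polynomial.X ^ r : Polynomial ℤ).natDegree ≤ D :=
    Polynomial.natDegree_sum_le_of_forall_le _ _ fun r hr =>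
      (Polynomial.natDegree_X_pow_le r).trans (Nat.lt_succ_iff.1 (Finset.mem_range.1 hr))
  have binomial_le : ((1 + Polynomial.X : Polynomial ℤ) ^ a).natDegree ≤ a := by
    compute_degree
  exact Polynomial.natDegree_mul_le_of_le geom_le binomial_le

theorem coeff_geomBinomial {D j : ℕ} (a : ℕ) (hj : j ≤ D) :
    (geomBinomial D a).coeff j = Chat a j := by
  have le_iff : {r ∈ range (D + 1) | r ≤ j} = range (j + 1) := by
    ext r
    simp only [Finset.mem_filter, Finset.mem_range]
    omega
  simp only [geomBinomial, Finset.sum_mul, Polynomial.finsetSum_coeff, Polynomial.coeff_X_pow_mul',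
    Polynomial.coeff_one_add_X_pow, ← Finset.sum_filter, le_iff]
  exact Finset.sum_range_reflect (fun r => (a.choose r : ℤ)) (j + 1)

theorem prod_geom_sum_mul_alternant {R : Type*} [CommRing R] {n m : ℕ} (u : Fin n → R) (D : ℕ)
    {e : Fin n → ℕ} (he : ∀ b, e b < m + n) :
    (∏ k, ∑ r ∈ range (D + 1), u k ^ r) * alternant (fun k => 1 + u k) e =
      ∑ mu ∈ boxPartitions n (D + m), alternant u (mu + staircase n) *
        ((Matrix.of fun a b => (geomBinomial D (e b)).coeff ((mu + staircase n) a)).det : ℤ) := by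
  have degree_lt (b : Fin n) : (geomBinomial D (e b)).natDegree < D + m + n := by
    have := natDegree_geomBinomial_le D (e b)
    have := he b
    omega
  rw [alternant, ← Matrix.det_mul_column]
  simpa [geomBinomial] using det_aeval_eq_sum_boxPartitions u degree_lt

theorem prod_one_add_add_mul_prod_geom_sum {R : Type*} [CommRing R] {n m : ℕ} (y : Fin m → R)
    (u : Fin n → R) (D : ℕ) :
    (∏ k, ∏ l, (1 + u k + y l)) * (∏ k, ∑ r ∈ range (D + 1), u k ^ r) *
        (alternant u (staircase n) * alternant y (staircase m)) =
      ∑ nu ∈ boxPartitions n m, ∑ mu ∈ boxPartitions n (D + m),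
        ((Matrix.of fun a b =>
            (geomBinomial D ((nu + staircase n) b)).coeff ((mu + staircase n) a)).det : ℤ) *
          (alternant u (mu + staircase n) * alternant y (conjCompl m nu + staircase m)) := by
  calc
    _ = (∏ k, ∑ r ∈ range (D + 1), u k ^ r) * (alternant (fun k => 1 + u k) (staircase n) *
          alternant y (staircase m) * ∏ k, ∏ l, (1 + u k + y l)) := by
      rw [alternant_const_add_staircase]
      ring
    _ = ∑ nu ∈ boxPartitions n m, ((∏ k, ∑ r ∈ range (D + 1), u k ^ r) *
          alternant (fun k => 1 + u k) (nu + staircase n)) *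
            alternant y (conjCompl m nu + staircase m) := by
      rw [dual_cauchy_alternant, Finset.mul_sum]
      simp only [mul_assoc]
    _ = _ := by
      refine Finset.sum_congr rfl fun nu hnu => ?_
      have exponent_lt (b : Fin n) : (nu + staircase n) b < m + n := by
        have := (mem_boxPartitions.1 hnu).1 b
        simp only [Pi.add_apply, staircase]
        omega
      rw [prod_geom_sum_mul_alternant u D exponent_lt, Finset.sum_mul]
      refine Finset.sum_congr rfl fun mu _ => ?_
      ring

/-! ### Homogeneous components -/

section homogeneousComponent

attribute [local instance] MvPolynomial.gradedAlgebra

variable {R τ : Type*} [CommSemiring R] {Q : MvPolynomial τ R} {e : ℕ}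

theorem coe_decompose_homogeneousSubmodule (P : MvPolynomial τ R) (n : ℕ) :
    (DirectSum.decompose (homogeneousSubmodule τ R) P n : MvPolynomial τ R) =
      homogeneousComponent n P :=
  decomposition.decompose'_apply P n

theorem homogeneousComponent_add_mul_of_isHomogeneous (P : MvPolynomial τ R)
    (hQ : Q.IsHomogeneous e) (n : ℕ) :
    homogeneousComponent (n + e) (P * Q) = homogeneousComponent n P * Q := by
  have hdecompose := DirectSum.coe_decompose_mul_of_right_mem_of_le (homogeneousSubmodule τ R)
    (a := P) hQ (Nat.le_add_left e n)
  simpa only [coe_decompose_homogeneousSubmodule, Nat.add_sub_cancel] using hdecompose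

theorem homogeneousComponent_mul_of_isHomogeneous_of_lt (P : MvPolynomial τ R)
    (hQ : Q.IsHomogeneous e) {n : ℕ} (hn : n < e) : homogeneousComponent n (P * Q) = 0 := by
  rw [← coe_decompose_homogeneousSubmodule]
  exact DirectSum.coe_decompose_mul_of_right_mem_of_not_le (homogeneousSubmodule τ R) hQ hn.not_ge

theorem homogeneousComponent_mul_sum_homogeneousComponent (P Q : MvPolynomial τ R) (d : ℕ) :
    homogeneousComponent d (P * ∑ r ∈ range (d + 1), homogeneousComponent r Q) =
      homogeneousComponent d (P * Q) := by
  set N := d + Q.totalDegree + 1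
  have Q_eq_sum : ∑ r ∈ range N, homogeneousComponent r Q = Q := by
    refine (Finset.sum_subset (Finset.range_subset_range.2 (by omega)) fun r _ hr => ?_).symm.trans
      (sum_homogeneousComponent Q)
    exact homogeneousComponent_eq_zero _ _ (by simpa using hr)
  conv_rhs => rw [← Q_eq_sum]
  rw [Finset.mul_sum, Finset.mul_sum, map_sum, map_sum]
  refine Finset.sum_subset (Finset.range_subset_range.2 (by omega)) fun r _ hr => ?_
  exact homogeneousComponent_mul_of_isHomogeneous_of_lt P
    (homogeneousComponent_isHomogeneous r Q) (by simpa using hr)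

end homogeneousComponent

theorem isHomogeneous_neg_X {R τ : Type*} [CommRing R] (t : τ) :
    (-X t : MvPolynomial τ R).IsHomogeneous 1 :=
  (isHomogeneous_X R t).neg

theorem homogeneousComponent_prod_geom_sum_neg_X {i h r D : ℕ} (hr : r ≤ D) :
    homogeneousComponent r (∏ k : Fin i, ∑ s ∈ range (D + 1),
        (-X (Sum.inl k) : MvPolynomial (Fin i ⊕ Fin h) ℤ) ^ s) = (-1) ^ r * hsymX i h r := by
  have monomial_isHomogeneous (f : Fin i → ℕ) :
      (∏ k, (-X (Sum.inl k) : MvPolynomial (Fin i ⊕ Fin h) ℤ) ^ f k).IsHomogeneous (∑ k, f k) :=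
    IsHomogeneous.prod _ _ _ fun k _ => by simpa using (isHomogeneous_neg_X _).pow (f k)
  have index_eq : {f ∈ Fintype.piFinset fun _ : Fin i => range (D + 1) | r = ∑ k, f k} =
      Finset.Nat.antidiagonalTuple i r := by
    ext f
    simp only [Finset.mem_filter, Fintype.mem_piFinset, Finset.mem_range,
      Finset.Nat.mem_antidiagonalTuple]
    refine ⟨fun hf => hf.2.symm, fun hf => ⟨fun k => ?_, hf.symm⟩⟩
    have := Finset.single_le_sum (fun _ _ => Nat.zero_le _) (Finset.mem_univ k) (f := f)
    omega
  rw [Finset.prod_univ_sum, map_sum, hsymX, Finset.mul_sum]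
  simp only [homogeneousComponent_of_mem (monomial_isHomogeneous _), ← Finset.sum_filter, index_eq]
  refine Finset.sum_congr rfl fun f hf => ?_
  rw [← Finset.Nat.mem_antidiagonalTuple.1 hf, ← Finset.prod_pow_eq_pow_sum,
    ← Finset.prod_mul_distrib]
  exact Finset.prod_congr rfl fun k _ => neg_pow _ _

/-- The variables `x_1, …, x_i`. -/
noncomputable def varX (i h : ℕ) (k : Fin i) : MvPolynomial (Fin i ⊕ Fin h) ℤ := X (Sum.inl k)

/-- The variables `y_1, …, y_h`. -/
noncomputable def varY (i h : ℕ) (l : Fin h) : MvPolynomial (Fin i ⊕ Fin h) ℤ := X (Sum.inr l)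

/-- The degree `d` component of `∏ (1 + y_l - x_k) · ∑ (-1)^r h_r(x)`. -/
noncomputable def chernComponent (i h d : ℕ) : MvPolynomial (Fin i ⊕ Fin h) ℤ :=
  homogeneousComponent d ((∏ k : Fin i, ∏ l : Fin h, (1 + X (Sum.inr l) - X (Sum.inl k))) *
    ∑ r ∈ range (d + 1), (-1) ^ r * hsymX i h r)

theorem chernComponent_eq_homogeneousComponent_prod {i h d D : ℕ} (hd : d ≤ D) :
    chernComponent i h d = homogeneousComponent d
      ((∏ k, ∏ l, (1 + (-varX i h) k + varY i h l)) *
        ∏ k, ∑ r ∈ range (D + 1), (-varX i h) k ^ r) := by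
  have factors (k : Fin i) (l : Fin h) : 1 + (-varX i h) k + varY i h l =
      1 + X (Sum.inr l) - X (Sum.inl k) := by
    simp only [Pi.neg_apply, varX, varY]
    ring
  have truncation : ∑ r ∈ range (d + 1), (-1) ^ r * hsymX i h r = ∑ r ∈ range (d + 1),
      homogeneousComponent r (∏ k, ∑ s ∈ range (D + 1), (-varX i h) k ^ s) :=
    Finset.sum_congr rfl fun r hr => (homogeneousComponent_prod_geom_sum_neg_X <|
      (Nat.lt_succ_iff.1 (Finset.mem_range.1 hr)).trans hd).symm
  rw [chernComponent, truncation, homogeneousComponent_mul_sum_homogeneousComponent]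
  simp only [factors]

theorem isHomogeneous_alternant_mul_alternant (i h : ℕ) (e : Fin i → ℕ) (e' : Fin h → ℕ) :
    (alternant (-varX i h) e * alternant (varY i h) e').IsHomogeneous (∑ k, e k + ∑ l, e' l) :=
  (isHomogeneous_alternant (fun k => isHomogeneous_neg_X (Sum.inl k)) e).mul
    (isHomogeneous_alternant (fun l => isHomogeneous_X ℤ (Sum.inr l)) e')

theorem det_coeff_geomBinomial_eq_Fdet {i M : ℕ} (nu : Fin i → ℕ) {mu : Fin i → ℕ}
    (hmu : ∀ k, mu k ≤ M) :
    (Matrix.of fun a b =>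
        (geomBinomial (M + i) ((nu + staircase i) b)).coeff ((mu + staircase i) a)).det =
      Fdet i (zeroExtend nu) (zeroExtend mu) := by
  rw [Fdet, ← Matrix.det_transpose]
  refine congrArg Matrix.det (Matrix.ext fun a b => ?_)
  have := hmu b
  have exponent_le : (mu + staircase i) b ≤ M + i := by
    simp only [Pi.add_apply, staircase]
    omega
  rw [Matrix.transpose_apply, Matrix.of_apply, coeff_geomBinomial _ exponent_le]
  simp [zeroExtend, staircase]

theorem filter_boxPartitions_congr {n d M M' : ℕ} (hM : d ≤ M) (hM' : d ≤ M')
    (P : (Fin n → ℕ) → Prop) [DecidablePred P] (hP : ∀ mu, P mu → ∑ k, mu k ≤ d) :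
    {mu ∈ boxPartitions n M | P mu} = {mu ∈ boxPartitions n M' | P mu} := by
  ext mu
  simp only [Finset.mem_filter, mem_boxPartitions]
  refine and_congr_left fun hmu => and_congr_left fun _ => forall_congr' fun k => ?_
  have := Finset.single_le_sum (fun _ _ => Nat.zero_le _) (Finset.mem_univ k) (f := mu)
  have := hP mu hmu
  omega

theorem homogeneousComponent_C_mul_alternant_mul_alternant {i h d : ℕ} (a : ℤ)
    {nu : Fin i → ℕ} (hnu : nu ∈ boxPartitions i h) (mu : Fin i → ℕ) :
    homogeneousComponent (d + (∑ k, staircase i k + ∑ l, staircase h l))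
        (C a * (alternant (-varX i h) (mu + staircase i) *
          alternant (varY i h) (conjCompl h nu + staircase h))) =
      if ∑ k, nu k + d = ∑ k, mu k + i * h then
        C a * (alternant (-varX i h) (mu + staircase i) *
          alternant (varY i h) (conjCompl h nu + staircase h))
      else 0 := by
  have size_add := sum_conjCompl_add_sum (mem_boxPartitions.1 hnu).1
  rw [homogeneousComponent_C_mul,
    homogeneousComponent_of_mem (isHomogeneous_alternant_mul_alternant i h _ _), mul_ite, mul_zero]
  refine if_congr ?_ rfl rfl
  simp only [Pi.add_apply, Finset.sum_add_distrib]
  omega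

theorem chernComponent_mul_alternants {i h d M : ℕ} (hd : d ≤ M) :
    chernComponent i h d *
        (alternant (-varX i h) (staircase i) * alternant (varY i h) (staircase h)) =
      ∑ nu ∈ boxPartitions i h,
        ∑ mu ∈ boxPartitions i M with ∑ k, nu k + d = ∑ k, mu k + i * h,
          C (Fdet i (zeroExtend nu) (zeroExtend mu)) *
            (alternant (-varX i h) (mu + staircase i) *
              alternant (varY i h) (conjCompl h nu + staircase h)) := by
  have hM : d ≤ M + i := hd.trans (Nat.le_add_right M i)
  rw [chernComponent_eq_homogeneousComponent_prod hM,
    ← homogeneousComponent_add_mul_of_isHomogeneous _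
      (isHomogeneous_alternant_mul_alternant i h _ _),
    prod_one_add_add_mul_prod_geom_sum, map_sum]
  refine Finset.sum_congr rfl fun nu hnu => ?_
  have size_le := sum_conjCompl_add_sum (mem_boxPartitions.1 hnu).1
  simp only [map_sum, ← eq_intCast (C : ℤ →+* MvPolynomial (Fin i ⊕ Fin h) ℤ),
    homogeneousComponent_C_mul_alternant_mul_alternant _ hnu, ← Finset.sum_filter]
  rw [filter_boxPartitions_congr (hM.trans (Nat.le_add_right _ h)) hd _ fun mu hmu => by omega]
  refine Finset.sum_congr rfl fun mu hmu => ?_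
  rw [det_coeff_geomBinomial_eq_Fdet nu (mem_boxPartitions.1 (Finset.mem_filter.1 hmu).1).1]

/-! ### Schur polynomials -/

/-- The bialternant characterization of the Schur polynomials in `n` variables. -/
def IsSchurFamily (n : ℕ) (S : (ℕ → ℕ) → MvPolynomial (Fin n) ℤ) : Prop :=
  ∀ nu : ℕ → ℕ, Antitone nu → (∀ k, n ≤ k → nu k = 0) →
    S nu * ∏ q ∈ Finset.univ.filter (fun q : Fin n × Fin n => q.1 < q.2), (X q.1 - X q.2) =
      (Matrix.of fun a b : Fin n =>
        (X a : MvPolynomial (Fin n) ℤ) ^ (nu (b : ℕ) + (n - 1 - (b : ℕ)))).det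

namespace IsSchurFamily

variable {n : ℕ} {S : (ℕ → ℕ) → MvPolynomial (Fin n) ℤ} {lam : Fin n → ℕ}

theorem mul_alternant (hS : IsSchurFamily n S) (hlam : Antitone lam) :
    S (zeroExtend lam) * alternant X (staircase n) = alternant X (lam + staircase n) := by
  rw [alternant_staircase, ← prod_filter_fst_lt_snd fun a b => X a - X b,
    hS _ (antitone_zeroExtend hlam) fun _ => zeroExtend_of_le]
  simp [zeroExtend, alternant, staircase]

theorem rename_mul_alternant (hS : IsSchurFamily n S) (hlam : Antitone lam) {τ : Type*}
    (ψ : Fin n → τ) :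
    rename ψ (S (zeroExtend lam)) * alternant (fun a => X (ψ a)) (staircase n) =
      alternant (fun a => X (ψ a)) (lam + staircase n) := by
  have rename_alternant (e : Fin n → ℕ) :
      rename ψ (alternant X e) = alternant (fun a => (X (ψ a) : MvPolynomial τ ℤ)) e := by
    simpa [Function.comp_def] using
      map_alternant (RingHomClass.toRingHom (rename (R := ℤ) ψ)) X e
  rw [← rename_alternant, ← rename_alternant, ← hS.mul_alternant hlam, map_mul]

theorem rename_mul_alternant_neg (hS : IsSchurFamily n S) (hlam : Antitone lam) {τ : Type*}
    (ψ : Fin n → τ) :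
    (-1) ^ (∑ k, lam k) * rename ψ (S (zeroExtend lam)) *
        alternant (-fun a => X (ψ a)) (staircase n) =
      alternant (-fun a => X (ψ a)) (lam + staircase n) := by
  simp only [alternant_neg, ← hS.rename_mul_alternant hlam, Pi.add_apply, Finset.sum_add_distrib,
    pow_add]
  ring

end IsSchurFamily

theorem alternant_varX_mul_alternant_varY_ne_zero (i h : ℕ) :
    alternant (-varX i h) (staircase i) * alternant (varY i h) (staircase h) ≠ 0 := by
  refine mul_ne_zero (alternant_staircase_ne_zero ?_) (alternant_staircase_ne_zero ?_)
  · exact neg_injective.comp ((X_injective (R := ℤ)).comp Sum.inl_injective)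
  · exact (X_injective (R := ℤ)).comp Sum.inr_injective

theorem chernComponent_eq_sum_boxPartitions {i h d M : ℕ} (hd : d ≤ M)
    {Sx : (ℕ → ℕ) → MvPolynomial (Fin i) ℤ} {Sy : (ℕ → ℕ) → MvPolynomial (Fin h) ℤ}
    (hSx : IsSchurFamily i Sx) (hSy : IsSchurFamily h Sy) :
    chernComponent i h d = ∑ nu ∈ boxPartitions i h,
      ∑ mu ∈ boxPartitions i M with ∑ k, nu k + d = ∑ k, mu k + i * h,
        C ((-1) ^ (∑ k, mu k) * Fdet i (zeroExtend nu) (zeroExtend mu)) *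
          rename Sum.inl (Sx (zeroExtend mu)) *
            rename Sum.inr (Sy (complConj i h (zeroExtend nu))) := by
  refine mul_right_cancel₀ (alternant_varX_mul_alternant_varY_ne_zero i h) ?_
  rw [chernComponent_mul_alternants hd, Finset.sum_mul]
  refine Finset.sum_congr rfl fun nu _ => ?_
  rw [Finset.sum_mul]
  refine Finset.sum_congr rfl fun mu hmu => ?_
  have mu_antitone := (mem_boxPartitions.1 (Finset.mem_filter.1 hmu).1).2
  have x_side := hSx.rename_mul_alternant_neg mu_antitone (Sum.inl : _ → Fin i ⊕ Fin h)
  have y_side := hSy.rename_mul_alternant (antitone_conjCompl h nu) (Sum.inr : _ → Fin i ⊕ Fin h)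
  rw [complConj_zeroExtend]
  unfold varX varY
  rw [← x_side, ← y_side]
  simp only [map_mul, map_pow, map_neg, map_one]
  ring

theorem thom_polynomial_sigma_i1_closed_general {i h d M : ℕ} (hd : d ≤ M)
    {Sx : (ℕ → ℕ) → MvPolynomial (Fin i) ℤ} {Sy : (ℕ → ℕ) → MvPolynomial (Fin h) ℤ}
    (hSx : IsSchurFamily i Sx) (hSy : IsSchurFamily h Sy) :
    homogeneousComponent d
        ((∏ k : Fin i, ∏ l : Fin h,
            (1 + X (Sum.inr l) - X (Sum.inl k) : MvPolynomial (Fin i ⊕ Fin h) ℤ))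
          * ∑ r ∈ range (d + 1), (-1) ^ r * hsymX i h r)
      = ∑ nu : Fin i → Fin (h + 1),
          if (∀ a b : Fin i, a ≤ b → nu b ≤ nu a) then
            ∑ mu : Fin i → Fin (M + 1),
              if (∀ a b : Fin i, a ≤ b → mu b ≤ mu a) ∧
                  (∑ k : Fin i, (nu k : ℕ)) + d = (∑ k : Fin i, (mu k : ℕ)) + i * h then
                C ((-1 : ℤ) ^ (∑ k : Fin i, (mu k : ℕ))
                    * Fdet i (extF (fun k => nu k)) (extF (fun k => mu k)))
                  * rename Sum.inl (Sx (extF (fun k => mu k)))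
                  * rename Sum.inr (Sy (complConj i h (extF (fun k => nu k))))
              else 0
          else 0 := by
  refine (chernComponent_eq_sum_boxPartitions hd hSx hSy).trans ?_
  simp only [sum_boxPartitions, Finset.sum_filter, ite_and]
  rfl

theorem thom_polynomial_sigma_i1_closed (i h : ℕ) (hi : 1 ≤ i) (hh : 1 ≤ h)
    (Sx : (ℕ → ℕ) → MvPolynomial (Fin i) ℤ)
    (Sy : (ℕ → ℕ) → MvPolynomial (Fin h) ℤ)
    -- bialternant characterization of the Schur polynomials in the x-variables:
    (hSx : ∀ nu : ℕ → ℕ, Antitone nu → (∀ k, i ≤ k → nu k = 0) →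
      Sx nu * ∏ q ∈ Finset.univ.filter (fun q : Fin i × Fin i => q.1 < q.2),
          (X q.1 - X q.2)
        = (Matrix.of fun a b : Fin i =>
            (X a : MvPolynomial (Fin i) ℤ) ^ (nu (b : ℕ) + (i - 1 - (b : ℕ)))).det)
    -- bialternant characterization of the Schur polynomials in the y-variables:
    (hSy : ∀ nu : ℕ → ℕ, Antitone nu → (∀ k, h ≤ k → nu k = 0) →
      Sy nu * ∏ q ∈ Finset.univ.filter (fun q : Fin h × Fin h => q.1 < q.2),
          (X q.1 - X q.2)
        = (Matrix.of fun a b : Fin h =>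
            (X a : MvPolynomial (Fin h) ℤ) ^ (nu (b : ℕ) + (h - 1 - (b : ℕ)))).det) :
    MvPolynomial.homogeneousComponent (i * h - i + 1)
        ((∏ k : Fin i, ∏ l : Fin h,
            (1 + X (Sum.inr l) - X (Sum.inl k) : MvPolynomial (Fin i ⊕ Fin h) ℤ))
          * ∑ r ∈ Finset.range ((i * h - i + 1) + 1), (-1) ^ r * hsymX i h r)
      = ∑ nu : Fin i → Fin (h + 1),
          if (∀ a b : Fin i, a ≤ b → nu b ≤ nu a) then
            ∑ mu : Fin i → Fin (i * h + 1),
              if (∀ a b : Fin i, a ≤ b → mu b ≤ mu a) ∧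
                  ((∑ k : Fin i, (nu k : ℕ)) = (∑ k : Fin i, (mu k : ℕ)) + (i - 1)) then
                C ((-1 : ℤ) ^ (∑ k : Fin i, (mu k : ℕ))
                    * Fdet i (extF (fun k => nu k)) (extF (fun k => mu k)))
                  * rename Sum.inl (Sx (extF (fun k => mu k)))
                  * rename Sum.inr (Sy (complConj i h (extF (fun k => nu k))))
              else 0
          else 0 := by
  have size_iff (a b : ℕ) : a = b + (i - 1) ↔ a + (i * h - i + 1) = b + i * h := by
    have := Nat.le_mul_of_pos_right i hh
    omega
  have degree_le : i * h - i + 1 ≤ i * h := by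
    have := Nat.le_mul_of_pos_right i hh
    omega
  simpa only [size_iff] using thom_polynomial_sigma_i1_closed_general degree_le hSx hSy
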